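/- Let α ∈ (0,1). There exists a constant C > 0 (depending only on α) such that for every λ > 0 and every t ≥ 0, E_α(−λ t^α) ≤ C / (1 + λ t^α). -/

import Mathlib

/-- The Mittag-Leffler function `E_α(x) = ∑_{k=0}^∞ x^k / Γ(αk + 1)`. -/
noncomputable def mittagLeffler (α x : ℝ) : ℝ :=
  ∑' k : ℕ, x ^ k / Real.Gamma (α * k + 1)

open MeasureTheory

lemma ml_kernel_cmp {α A B r : ℝ} (hα : α ≤ 1) (hA : 0 < A) (hB : 0 < B) (hr : 0 < r)
    (h : B ≤ A * r) : A ^ (α - 1) * r ^ (α - 1) ≤ B ^ (α - 1) := by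
  rw [← Real.mul_rpow hA.le hr.le]
  exact Real.rpow_le_rpow_of_nonpos hB h (by linarith)

lemma ml_kernel_int {α : ℝ} (hα : 0 < α) (T a b : ℝ) {g : ℝ → ℝ} (hg : Continuous g) :
    IntervalIntegrable (fun s => (T - s) ^ (α - 1) * g s) volume a b := by
  refine IntervalIntegrable.mul_continuousOn ?_ hg.continuousOn
  have := (intervalIntegral.intervalIntegrable_rpow' (a := T - a) (b := T - b)
    (r := α - 1) (by linarith)).comp_sub_left T
  simpa using this

lemma ml_kernel_integral {α : ℝ} (hα : 0 < α) (t T : ℝ) :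
    ∫ s in t..T, (T - s) ^ (α - 1) = (T - t) ^ α / α := by
  rw [intervalIntegral.integral_comp_sub_left (fun x => x ^ (α - 1)) T,
    integral_rpow (Or.inl (by linarith))]
  simp [Real.zero_rpow hα.ne']

lemma ml_pos {α c : ℝ} (hα : 0 < α) (hα1 : α < 1) (hc : 0 < c) {g q : ℝ → ℝ}
    (hg : Continuous g) (h0 : 0 < g 0)
    (hq : ∀ t t', 0 < t → t < t' → q t * (t' / t) ^ (α - 1) ≤ q t')
    (heq : ∀ t, 0 ≤ t → g t + c * ∫ s in (0:ℝ)..t, (t - s) ^ (α - 1) * g s = q t) :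
    ∀ t, 0 ≤ t → 0 < g t := by
  by_contra! hcon
  obtain ⟨t1, ht1, hgt1⟩ := hcon
  set S : Set ℝ := Set.Ici 0 ∩ g ⁻¹' Set.Iic 0 with hS
  have hScl : IsClosed S := isClosed_Ici.inter (isClosed_Iic.preimage hg)
  have hSb : BddBelow S := ⟨0, fun x hx => hx.1⟩
  have hmem : sInf S ∈ S := hScl.csInf_mem ⟨t1, ht1, hgt1⟩ hSb
  set t0 := sInf S with ht0
  have hlt : ∀ t, 0 ≤ t → t < t0 → 0 < g t := by
    intro t h1 h2
    by_contra! h3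
    exact absurd (csInf_le hSb (show t ∈ S from ⟨h1, h3⟩)) (not_le.2 h2)
  have hg0 : g t0 ≤ 0 := hmem.2
  have ht0pos : 0 < t0 := by
    rcases (show (0:ℝ) ≤ t0 from hmem.1).eq_or_lt with h | h
    · rw [← h] at hg0; linarith
    · exact h
  clear_value t0
  -- choose ε
  obtain ⟨ε, hε, hε2, hεc⟩ : ∃ ε : ℝ, 0 < ε ∧ ε ≤ t0 / 2 ∧ c * (ε ^ α / α) < 1 / 2 := by
    have ht : Filter.Tendsto (fun ε : ℝ => c * (ε ^ α / α)) (nhds 0) (nhds 0) := by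
      have : Continuous (fun ε : ℝ => c * (ε ^ α / α)) :=
        continuous_const.mul ((Real.continuous_rpow_const hα.le).div_const _)
      have h := this.tendsto 0
      simpa [Real.zero_rpow hα.ne'] using h
    have h1 : ∀ᶠ ε in nhdsWithin (0:ℝ) (Set.Ioi 0), c * (ε ^ α / α) < 1 / 2 :=
      (ht.mono_left nhdsWithin_le_nhds).eventually_lt_const (by norm_num)
    have h2 : ∀ᶠ ε in nhdsWithin (0:ℝ) (Set.Ioi 0), ε ∈ Set.Ioc 0 (t0/2) :=
      Ioc_mem_nhdsGT (by linarith)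
    obtain ⟨ε, h3, h4⟩ := (h1.and h2).exists
    exact ⟨ε, h4.1, h4.2, h3⟩
  obtain ⟨t, ht, hmax⟩ := (isCompact_Icc (a := t0 - ε) (b := t0)).exists_isMaxOn
    ⟨t0 - ε, by simp [hε.le]⟩ hg.continuousOn
  have hgt : 0 < g t := (hlt (t0 - ε) (by linarith) (by linarith)).trans_le
    (hmax (by simp [hε.le]))
  have htt0 : t < t0 := by
    rcases ht.2.eq_or_lt with h | h
    · rw [h] at hgt; linarith
    · exact h
  have htpos : 0 < t := by linarith [ht.1]
  set ρ := (t0 / t) ^ (α - 1) with hρ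
  have hρ2 : 1 / 2 ≤ ρ := by
    have h1 : t0 / t ≤ 2 := by
      rw [div_le_iff₀ htpos]; linarith [ht.1]
    have h2 : (2:ℝ) ^ (α - 1) ≤ ρ :=
      Real.rpow_le_rpow_of_nonpos (by positivity) h1 (by linarith)
    have h3 : (2:ℝ) ^ (-1:ℝ) ≤ 2 ^ (α - 1) :=
      Real.rpow_le_rpow_of_exponent_le (by norm_num) (by linarith)
    rw [Real.rpow_neg_one] at h3
    linarith
  have hI1 : ∫ s in (0:ℝ)..t, (t0 - s) ^ (α - 1) * g s ≤
      ρ * ∫ s in (0:ℝ)..t, (t - s) ^ (α - 1) * g s := by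
    rw [← intervalIntegral.integral_const_mul]
    refine intervalIntegral.integral_mono_on_of_le_Ioo htpos.le (ml_kernel_int hα _ _ _ hg)
      ((ml_kernel_int hα _ _ _ hg).const_mul _) ?_
    intro s hs
    rw [← mul_assoc]
    have hgs := hlt s hs.1.le (hs.2.trans htt0)
    refine mul_le_mul_of_nonneg_right ?_ hgs.le
    have hts : 0 < t - s := by linarith [hs.2]
    have hrat : 0 < t0 / t := by positivity
    rw [hρ, ← Real.mul_rpow hrat.le hts.le]
    refine Real.rpow_le_rpow_of_nonpos (by positivity) ?_ (by linarith)
    rw [div_mul_eq_mul_div, div_le_iff₀ htpos]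
    nlinarith [hs.1]
  have hI2 : ∫ s in t..t0, (t0 - s) ^ (α - 1) * g s ≤ (t0 - t) ^ α / α * g t := by
    rw [← ml_kernel_integral hα, ← intervalIntegral.integral_mul_const]
    refine intervalIntegral.integral_mono_on_of_le_Ioo htt0.le (ml_kernel_int hα _ _ _ hg)
      (ml_kernel_int hα _ _ _ continuous_const) ?_
    intro s hs
    refine mul_le_mul_of_nonneg_left (hmax ⟨by linarith [ht.1, hs.1], hs.2.le⟩) ?_
    exact Real.rpow_nonneg (by linarith [hs.2]) _
  have hsplit := intervalIntegral.integral_add_adjacent_intervals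
    (ml_kernel_int hα t0 0 t hg) (ml_kernel_int hα t0 t t0 hg)
  have e0 := heq t0 ht0pos.le
  have e1 := heq t htpos.le
  have e2 := hq t t0 htpos htt0
  rw [← hρ] at e2
  have e3 : (t0 - t) ^ α ≤ ε ^ α := Real.rpow_le_rpow (by linarith) (by linarith [ht.1]) hα.le
  have e4 : c * ((t0 - t) ^ α / α) < 1 / 2 := lt_of_le_of_lt (by gcongr) hεc
  rw [← hsplit] at e0
  have f1 := mul_le_mul_of_nonneg_left hI1 hc.le
  have f2 := mul_le_mul_of_nonneg_left hI2 hc.le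
  have f3 : ρ * (g t + c * ∫ s in (0:ℝ)..t, (t - s) ^ (α - 1) * g s) = ρ * q t := by rw [e1]
  have f4 : 0 < (ρ - c * ((t0 - t) ^ α / α)) * g t := mul_pos (by linarith) hgt
  nlinarith

lemma ml_main {α c : ℝ} (hα : 0 < α) (hα1 : α < 1) (hc : 0 < c) {u : ℝ → ℝ}
    (hu : Continuous u)
    (heq : ∀ t, 0 ≤ t → u t + c * ∫ s in (0:ℝ)..t, (t - s) ^ (α - 1) * u s = 1) (t : ℝ)
    (ht : 0 ≤ t) : u t ≤ 1 ∧ u t * (c * (t ^ α / α)) ≤ 1 := by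
  have hu0 : u 0 = 1 := by simpa using heq 0 le_rfl
  have hpos : ∀ t, 0 ≤ t → 0 < u t := by
    refine ml_pos hα hα1 hc (q := fun _ => 1) hu (by simp [hu0]) ?_ heq
    intro t t' h1 h2
    rw [one_mul]
    exact Real.rpow_le_one_of_one_le_of_nonpos ((one_le_div h1).2 h2.le) (by linarith)
  have hle : ∀ t, 0 ≤ t → u t ≤ 1 := by
    intro t ht
    have := heq t ht
    have h2 : 0 ≤ ∫ s in (0:ℝ)..t, (t - s) ^ (α - 1) * u s := by
      refine intervalIntegral.integral_nonneg ht ?_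
      intro s hs
      exact mul_nonneg (Real.rpow_nonneg (by linarith [hs.2]) _) (hpos s hs.1).le
    have := mul_nonneg hc.le h2
    linarith
  have hlt1 : ∀ t, 0 < t → u t < 1 := by
    intro t ht
    have := heq t ht.le
    have h2 : 0 < ∫ s in (0:ℝ)..t, (t - s) ^ (α - 1) * u s := by
      refine intervalIntegral.intervalIntegral_pos_of_pos_on (ml_kernel_int hα _ _ _ hu) ?_ ht
      intro s hs
      exact mul_pos (Real.rpow_pos_of_pos (by linarith [hs.2]) _) (hpos s hs.1.le)
    have := mul_pos hc h2
    linarith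
  have hdec : ∀ δ, 0 < δ → ∀ t, 0 ≤ t → 0 < u t - u (t + δ) := by
    intro δ hδ
    refine ml_pos hα hα1 hc (g := fun t => u t - u (t + δ))
      (q := fun t => c * ∫ s in (0:ℝ)..δ, (t + δ - s) ^ (α - 1) * u s) (by fun_prop) ?_ ?_ ?_
    · simp only [zero_add, hu0]; linarith [hlt1 δ hδ]
    · intro t t' h1 h2
      rw [mul_assoc]
      refine mul_le_mul_of_nonneg_left ?_ hc.le
      rw [← intervalIntegral.integral_mul_const]
      refine intervalIntegral.integral_mono_on_of_le_Ioo hδ.le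
        ((ml_kernel_int hα _ _ _ hu).mul_const _) (ml_kernel_int hα _ _ _ hu) ?_
      intro s hs
      rw [mul_right_comm]
      refine mul_le_mul_of_nonneg_right ?_ (hpos s hs.1.le).le
      have hs2 := hs.2
      refine ml_kernel_cmp hα1.le (by linarith) (by linarith) (div_pos (h1.trans h2) h1) ?_
      rw [← mul_div_assoc, le_div_iff₀ h1]
      nlinarith
    · intro t ht
      have e1 := heq t ht
      have e2 := heq (t + δ) (by linarith)
      have hs := intervalIntegral.integral_add_adjacent_intervals
        (ml_kernel_int hα (t + δ) 0 δ hu) (ml_kernel_int hα (t + δ) δ (t + δ) hu)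
      have hsh := intervalIntegral.integral_comp_add_right (a := 0) (b := t)
        (fun s => (t + δ - s) ^ (α - 1) * u s) δ
      have hd : ∫ s in (0:ℝ)..t, (t - s) ^ (α - 1) * (u s - u (s + δ)) =
          (∫ s in (0:ℝ)..t, (t - s) ^ (α - 1) * u s) -
          ∫ s in (0:ℝ)..t, (t - s) ^ (α - 1) * u (s + δ) := by
        rw [← intervalIntegral.integral_sub (ml_kernel_int hα _ _ _ hu)
          (ml_kernel_int hα _ _ _ (g := fun s => u (s + δ)) (by fun_prop))]
        simp only [mul_sub]
      simp only [zero_add, add_sub_add_right_eq_sub] at hsh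
      rw [hd, hsh]
      rw [← hs] at e2
      linarith
  refine ⟨hle t ht, ?_⟩
  have e := heq t ht
  have : (t ^ α / α) * u t ≤ ∫ s in (0:ℝ)..t, (t - s) ^ (α - 1) * u s := by
    have h := ml_kernel_integral hα 0 t
    rw [sub_zero] at h
    rw [← h, ← intervalIntegral.integral_mul_const]
    refine intervalIntegral.integral_mono_on_of_le_Ioo ht
      (ml_kernel_int hα _ _ _ continuous_const) (ml_kernel_int hα _ _ _ hu) ?_
    intro s hs
    have h1 := hdec (t - s) (by linarith [hs.2]) s hs.1.le
    rw [add_sub_cancel] at h1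
    exact mul_le_mul_of_nonneg_left (by linarith) (Real.rpow_nonneg (by linarith [hs.2]) _)
  have h3 := mul_le_mul_of_nonneg_left this hc.le
  linarith [hpos t ht]

lemma ml_gamma_lower {R s : ℝ} (hR : 0 < R) (hs : 1 ≤ s) :
    R ^ (s - 1) * Real.exp (-R) ≤ Real.Gamma s := by
  rw [Real.Gamma_eq_integral (by linarith), ← integral_exp_neg_Ioi R, ← integral_const_mul]
  have hint := Real.GammaIntegral_convergent (s := s) (by linarith)
  have hsub : Set.Ioi R ⊆ Set.Ioi (0:ℝ) := Set.Ioi_subset_Ioi hR.le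
  calc ∫ x in Set.Ioi R, R ^ (s - 1) * Real.exp (-x)
      ≤ ∫ x in Set.Ioi R, Real.exp (-x) * x ^ (s - 1) := by
        refine setIntegral_mono_on ((integrableOn_exp_neg_Ioi R).const_mul _)
          (hint.mono_set hsub) measurableSet_Ioi ?_
        intro x hx
        rw [mul_comm]
        exact mul_le_mul_of_nonneg_left
          (Real.rpow_le_rpow hR.le (le_of_lt hx) (by linarith)) (Real.exp_pos _).le
    _ ≤ _ := by
        refine setIntegral_mono_set hint ?_ hsub.eventuallyLE
        refine (ae_restrict_iff' measurableSet_Ioi).2 (Filter.Eventually.of_forall ?_)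
        intro x hx
        exact mul_nonneg (Real.exp_pos _).le (Real.rpow_nonneg (le_of_lt hx) _)

lemma ml_summable {α : ℝ} (hα : 0 < α) {x : ℝ} (hx : 0 ≤ x) :
    Summable (fun k : ℕ => x ^ k / Real.Gamma (α * k + 1)) := by
  set y := 2 * x + 1 with hy
  set R := y ^ (1 / α) with hR
  have hyp : 0 < y := by positivity
  have hRp : 0 < R := by positivity
  have hRα : R ^ α = y := by
    rw [hR, ← Real.rpow_mul hyp.le, one_div_mul_cancel hα.ne', Real.rpow_one]
  refine Summable.of_nonneg_of_le (f := fun k : ℕ => Real.exp R * (1 / 2 : ℝ) ^ k) ?_ ?_ ?_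
  · intro k
    have := Real.Gamma_pos_of_pos (s := α * k + 1) (by positivity)
    positivity
  · intro k
    have hk : (0:ℝ) ≤ α * k := by positivity
    have h := ml_gamma_lower (s := α * k + 1) hRp (by linarith)
    rw [add_sub_cancel_right, Real.rpow_mul hRp.le, hRα, Real.rpow_natCast] at h
    have hG := Real.Gamma_pos_of_pos (s := α * k + 1) (by positivity)
    rw [div_le_iff₀ hG]
    calc x ^ k ≤ (y / 2) ^ k := by gcongr; linarith
      _ = Real.exp R * (1 / 2 : ℝ) ^ k * (y ^ k * Real.exp (-R)) := by
        rw [Real.exp_neg, div_pow, one_div, inv_pow]; field_simp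
      _ ≤ _ := by gcongr
  · exact (summable_geometric_of_lt_one (by norm_num) (by norm_num)).mul_left _

lemma ml_continuous {α : ℝ} (hα : 0 < α) : Continuous (mittagLeffler α) := by
  rw [continuous_iff_continuousAt]
  intro x
  have hx : Metric.ball (0:ℝ) (|x| + 1) ∈ nhds x := Metric.isOpen_ball.mem_nhds (by simp)
  refine ContinuousOn.continuousAt (s := Metric.ball (0:ℝ) (|x| + 1)) ?_ hx
  refine continuousOn_tsum (u := fun k : ℕ => (|x| + 1) ^ k / Real.Gamma (α * k + 1)) ?_
    (ml_summable hα (by positivity)) ?_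
  · intro k; fun_prop
  · intro k z hz
    have hG := Real.Gamma_pos_of_pos (s := α * k + 1) (by positivity)
    rw [norm_div, norm_pow, Real.norm_of_nonneg hG.le]
    have : ‖z‖ ≤ |x| + 1 := by simpa using (Metric.mem_ball.1 hz).le
    gcongr

lemma ml_beta {a b t : ℝ} (ha : 0 < a) (hb : 0 < b) (ht : 0 < t) :
    ∫ s in (0:ℝ)..t, (t - s) ^ (a - 1) * s ^ (b - 1) =
      t ^ (a + b - 1) * (Real.Gamma a * Real.Gamma b / Real.Gamma (a + b)) := by
  have h := Complex.betaIntegral_scaled b a ht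
  rw [Complex.betaIntegral_eq_Gamma_mul_div _ _ (by simpa) (by simpa)] at h
  apply Complex.ofReal_injective
  rw [← intervalIntegral.integral_ofReal]
  have h2 : ∫ s in (0:ℝ)..t, (((t - s) ^ (a - 1) * s ^ (b - 1) : ℝ) : ℂ) =
      ∫ x in (0:ℝ)..t, (x : ℂ) ^ ((b:ℂ) - 1) * ((t : ℂ) - x) ^ ((a:ℂ) - 1) := by
    refine intervalIntegral.integral_congr ?_
    intro s hs
    rw [Set.uIcc_of_le ht.le] at hs
    simp only
    rw [Complex.ofReal_mul, Complex.ofReal_cpow (by linarith [hs.2]), Complex.ofReal_cpow hs.1]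
    push_cast
    ring
  rw [h2, h]
  push_cast
  rw [Complex.ofReal_cpow ht.le, ← Complex.Gamma_ofReal, ← Complex.Gamma_ofReal,
    ← Complex.Gamma_ofReal]
  push_cast
  rw [add_comm (b:ℂ), mul_comm (Complex.Gamma b)]

lemma ml_volterra {α : ℝ} (hα : 0 < α) (t : ℝ) (ht : 0 ≤ t) :
    mittagLeffler α (-(t ^ α)) + (Real.Gamma α)⁻¹ *
      ∫ s in (0:ℝ)..t, (t - s) ^ (α - 1) * mittagLeffler α (-(s ^ α)) = 1 := by
  have hsumm : ∀ z : ℝ, Summable (fun k : ℕ => z ^ k / Real.Gamma (α * k + 1)) := by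
    intro z
    refine Summable.of_norm ?_
    refine (ml_summable hα (abs_nonneg z)).congr ?_
    intro k
    have hG := Real.Gamma_pos_of_pos (s := α * k + 1) (by positivity)
    rw [norm_div, norm_pow, Real.norm_of_nonneg hG.le, Real.norm_eq_abs]
  have hGα := Real.Gamma_pos_of_pos hα
  have hz : ∀ z : ℝ, mittagLeffler α z =
      1 + ∑' k : ℕ, z ^ (k + 1) / Real.Gamma (α * (k + 1 : ℕ) + 1) := by
    intro z
    rw [mittagLeffler, (hsumm z).tsum_eq_zero_add]
    simp
  rcases ht.eq_or_lt with h0 | htp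
  · subst h0
    rw [hz]
    simp [Real.zero_rpow hα.ne']
  have hterm : ∀ (k : ℕ), ∫ s in (0:ℝ)..t, (t - s) ^ (α - 1) *
      ((s ^ α) ^ k / Real.Gamma (α * k + 1)) =
      Real.Gamma α * ((t ^ α) ^ (k + 1) / Real.Gamma (α * (k + 1 : ℕ) + 1)) := by
    intro k
    have hG := Real.Gamma_pos_of_pos (s := α * k + 1) (by positivity)
    have hb := ml_beta (a := α) (b := α * k + 1) hα (by positivity) htp
    have e1 : α + (α * k + 1) = α * (k + 1 : ℕ) + 1 := by push_cast; ring
    rw [e1, add_sub_cancel_right, add_sub_cancel_right] at hb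
    have : ∫ s in (0:ℝ)..t, (t - s) ^ (α - 1) * ((s ^ α) ^ k / Real.Gamma (α * k + 1)) =
        ∫ s in (0:ℝ)..t, (t - s) ^ (α - 1) * s ^ (α * k) * (Real.Gamma (α * k + 1))⁻¹ := by
      refine intervalIntegral.integral_congr ?_
      intro s hs
      rw [Set.uIcc_of_le ht] at hs
      simp only
      rw [Real.rpow_mul hs.1, Real.rpow_natCast]
      ring
    rw [this, intervalIntegral.integral_mul_const, hb, Real.rpow_mul ht, Real.rpow_natCast]
    field_simp
  have hcont : ∀ k : ℕ, Continuous (fun s : ℝ => (-(s ^ α)) ^ k / Real.Gamma (α * k + 1)) := by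
    intro k
    exact ((Real.continuous_rpow_const hα.le).neg.pow k).div_const _
  have hterm2 : ∀ (k : ℕ), ∫ s in (0:ℝ)..t, (t - s) ^ (α - 1) *
      ((-(s ^ α)) ^ k / Real.Gamma (α * k + 1)) =
      -(Real.Gamma α * ((-(t ^ α)) ^ (k + 1) / Real.Gamma (α * (k + 1 : ℕ) + 1))) := by
    intro k
    have : ∀ s : ℝ, (t - s) ^ (α - 1) * ((-(s ^ α)) ^ k / Real.Gamma (α * k + 1)) =
        (-1) ^ k * ((t - s) ^ (α - 1) * ((s ^ α) ^ k / Real.Gamma (α * k + 1))) := by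
      intro s; rw [neg_pow]; ring
    simp_rw [this]
    rw [intervalIntegral.integral_const_mul, hterm, neg_pow (t ^ α)]
    ring
  have hsw : HasSum (fun k : ℕ => ∫ s in Set.Ioc 0 t, (t - s) ^ (α - 1) *
      ((-(s ^ α)) ^ k / Real.Gamma (α * k + 1)))
      (∫ s in Set.Ioc 0 t, ∑' k : ℕ, (t - s) ^ (α - 1) *
      ((-(s ^ α)) ^ k / Real.Gamma (α * k + 1))) := by
    refine hasSum_integral_of_summable_integral_norm ?_ ?_
    · intro k
      exact (ml_kernel_int hα t 0 t (hcont k)).1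
    · have hs := ((summable_nat_add_iff 1).2 (hsumm (t ^ α))).mul_left (Real.Gamma α)
      refine hs.congr ?_
      intro k
      rw [← hterm k, intervalIntegral.integral_of_le ht]
      refine setIntegral_congr_fun measurableSet_Ioc ?_
      intro s hs
      have hG := Real.Gamma_pos_of_pos (s := α * k + 1) (by positivity)
      simp only
      rw [norm_mul, norm_div, norm_pow, norm_neg, Real.norm_of_nonneg hG.le,
        Real.norm_of_nonneg (Real.rpow_nonneg hs.1.le _),
        Real.norm_of_nonneg (Real.rpow_nonneg (sub_nonneg.2 hs.2) _)]
  simp only [tsum_mul_left, ← intervalIntegral.integral_of_le ht, hterm2] at hsw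
  have hval := hsw.tsum_eq
  rw [tsum_neg, tsum_mul_left] at hval
  change _ = ∫ s in (0:ℝ)..t, (t - s) ^ (α - 1) * mittagLeffler α (-(s ^ α)) at hval
  rw [← hval, hz (-(t ^ α))]
  field_simp
  ring

theorem mittagLeffler_decay_bound (α : ℝ) (hα : α ∈ Set.Ioo (0:ℝ) 1) :
    ∃ C : ℝ, 0 < C ∧ ∀ lam : ℝ, 0 < lam → ∀ t : ℝ, 0 ≤ t →
      mittagLeffler α (-lam * t ^ α) ≤ C / (1 + lam * t ^ α) := by
  obtain ⟨h0, h1⟩ := hα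
  have hG := Real.Gamma_pos_of_pos h0
  refine ⟨1 + α * Real.Gamma α, by positivity, ?_⟩
  intro lam hl t ht
  have hx : 0 ≤ lam * t ^ α := by positivity
  rw [neg_mul]
  set x := lam * t ^ α with hxd
  clear_value x
  have hτ : (x ^ (1 / α)) ^ α = x := by
    rw [← Real.rpow_mul hx, one_div_mul_cancel h0.ne', Real.rpow_one]
  have hm := ml_main h0 h1 (inv_pos.2 hG) (u := fun s => mittagLeffler α (-(s ^ α)))
    ((ml_continuous h0).comp (Real.continuous_rpow_const h0.le).neg)
    (ml_volterra h0) (x ^ (1 / α)) (by positivity)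
  simp only [hτ] at hm
  obtain ⟨m1, m2⟩ := hm
  rw [le_div_iff₀ (by positivity)]
  have m3 : mittagLeffler α (-x) * x ≤ α * Real.Gamma α := by
    have : mittagLeffler α (-x) * ((Real.Gamma α)⁻¹ * (x / α)) =
      mittagLeffler α (-x) * x / (α * Real.Gamma α) := by field_simp
    rw [this, div_le_one (by positivity)] at m2
    exact m2
  linarith
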